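/- arXiv:2105.02496 — 2 statements merged into one kernel-verified Lean document; each statement's English description precedes it below -/
import Mathlib

section
/- Let G be a prolific graph. Then there exists r with 1 ≤ r ≤ 3 such that Δ(L^r(G)) > Δ(G), where Δ denotes the maximum degree. -/
open SimpleGraph

/-- A bundled simple graph: a vertex type together with a simple graph on it. -/
structure FGraph where
  V : Type
  G : SimpleGraph V

/-- The line graph of a bundled graph: the vertices are the edges of `G`, two distinct
edges being adjacent iff they share an endpoint. -/
def FGraph.line (X : FGraph) : FGraph := ⟨X.G.edgeSet, X.G.lineGraph⟩

/-- The `k`-fold iterated line graph `L^k(G)`. -/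
def FGraph.iter (X : FGraph) (k : ℕ) : FGraph := FGraph.line^[k] X

/-- The number of vertices `n(G)`. -/
noncomputable def FGraph.n (X : FGraph) : ℕ := Nat.card X.V

/-- The number of edges `e(G)`. -/
noncomputable def FGraph.e (X : FGraph) : ℕ := Nat.card X.G.edgeSet

/-- The degree of a vertex. -/
noncomputable def FGraph.deg (X : FGraph) (v : X.V) : ℕ := Nat.card (X.G.neighborSet v)

/-- The maximum degree `Δ(G)`. -/
noncomputable def FGraph.maxDeg (X : FGraph) : ℕ := sSup (Set.range X.deg)

/-- The minimum degree `δ(G)`. -/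
noncomputable def FGraph.minDeg (X : FGraph) : ℕ := sInf (Set.range X.deg)

/-- The average degree `d(G) = 2e(G)/n(G)`, as a rational number. -/
noncomputable def FGraph.avgDeg (X : FGraph) : ℚ := 2 * (X.e : ℚ) / (X.n : ℚ)

/-- A graph is prolific if it is connected and isomorphic to no path graph `P_k`,
to no cycle graph `C_k`, and not to the star `K_{1,3}`. -/
def FGraph.Prolific (X : FGraph) : Prop :=
  X.G.Connected ∧
  (∀ k : ℕ, IsEmpty (X.G ≃g pathGraph k)) ∧
  (∀ k : ℕ, IsEmpty (X.G ≃g cycleGraph k)) ∧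
  IsEmpty (X.G ≃g completeBipartiteGraph (Fin 1) (Fin 3))

/-!
A copy of `H` in a connected graph `G` which fills the whole neighbourhood of each of its vertices
is all of `G`. Applied to a vertex whose neighbours are all leaves, to a cycle, and to a longest
path, this recognises the stars among the connected graphs, and the paths and cycles among those
of maximum degree at most two. A prolific graph therefore has a vertex `v` of maximum degree
`Δ ≥ 3`, and if `Δ = 3`, then `v` has a neighbour of degree at least two.

As `uv` has degree `d(u) + d(v) - 2` in `L(G)`, three neighbours `a`, `b`, `c` of `v` yield the
vertex `{{va, vb}, {va, vc}}` of `L³(G)`, of degree `4d(v) + 2d(a) + d(b) + d(c) - 14`. This is at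
least `4Δ - 10 > Δ` if `Δ ≥ 4`, and it is at least `4 > Δ` if `Δ = 3` and `d(a) ≥ 2`.
-/

section LocallySurjectiveCopy

variable {V W : Type*} {G : SimpleGraph V} {H : SimpleGraph W}

theorem nonempty_iso_of_neighborSet_subset_image [Nonempty W] (hG : G.Preconnected)
    (f : Copy H G) (hf : ∀ w, G.neighborSet (f w) ⊆ f '' H.neighborSet w) :
    Nonempty (G ≃g H) := by
  have hsurj : Function.Surjective f := by
    by_contra hmiss
    obtain ⟨y, hy⟩ := not_forall.mp hmiss
    obtain ⟨w⟩ := ‹Nonempty W›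
    obtain ⟨p⟩ := hG (f w) y
    obtain ⟨d, -, ⟨w', hw'⟩, hd⟩ :=
      p.exists_boundary_dart (Set.range f) ⟨w, rfl⟩ hy
    have hadj : d.snd ∈ G.neighborSet (f w') := hw' ▸ d.adj
    exact hd (Set.image_subset_range _ _ (hf w' hadj))
  have hadj_iff {a b : W} : G.Adj (f a) (f b) ↔ H.Adj a b := by
    refine ⟨fun h ↦ ?_, fun h ↦ f.toHom.map_adj h⟩
    obtain ⟨b', hab', hb'⟩ := hf a h
    exact f.injective hb' ▸ hab'
  exact ⟨RelIso.symm ⟨Equiv.ofBijective f ⟨f.injective, hsurj⟩, hadj_iff⟩⟩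

theorem neighborSet_subset_image_of_degree_le (f : Copy H G) {w : W}
    [Fintype (H.neighborSet w)] [Fintype (G.neighborSet (f w))] (h : G.degree (f w) ≤ H.degree w) :
    G.neighborSet (f w) ⊆ f '' H.neighborSet w := by
  have hsub : (H.neighborFinset w).map f.toEmbedding ⊆ G.neighborFinset (f w) := by
    intro y hy
    obtain ⟨x, hx, rfl⟩ := Finset.mem_map.mp hy
    exact (G.mem_neighborFinset _ _).mpr (f.toHom.map_adj ((H.mem_neighborFinset _ _).mp hx))
  have heq := Finset.eq_of_subset_of_card_le hsub (by simpa using h)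
  rw [← G.coe_neighborFinset, ← heq, Finset.coe_map, H.coe_neighborFinset]
  rfl

end LocallySurjectiveCopy

section Recognition

variable {V : Type*} {G : SimpleGraph V}

theorem nonempty_iso_completeBipartiteGraph_of_neighborSet_subset (hG : G.Preconnected) {v : V}
    (hleaf : ∀ w, G.Adj v w → G.neighborSet w ⊆ {v}) :
    Nonempty (G ≃g completeBipartiteGraph (Fin 1) (G.neighborSet v)) := by
  let f : Copy (completeBipartiteGraph (Fin 1) (G.neighborSet v)) G :=
    { toHom :=
        { toFun := Sum.elim (fun _ ↦ v) (↑)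
          map_rel' := by
            rintro (i | ⟨a, ha⟩) (j | ⟨b, hb⟩) h
            · simp at h
            · exact hb
            · exact ha.symm
            · simp at h }
      injective' := by
        rintro (i | ⟨a, ha⟩) (j | ⟨b, hb⟩) h
        · exact congrArg _ (Subsingleton.elim i j)
        · exact absurd h hb.ne
        · exact absurd h ha.ne'
        · exact congrArg _ (Subtype.ext h) }
  refine nonempty_iso_of_neighborSet_subset_image hG f ?_
  rintro (i | ⟨a, ha⟩) y hy
  · exact ⟨.inr ⟨y, hy⟩, by simp, rfl⟩
  · exact ⟨.inl 0, by simp, (hleaf a ha hy).symm⟩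

theorem exists_adj_two_le_degree [G.LocallyFinite] (hG : G.Preconnected) {v : V} {n : ℕ}
    (hv : G.degree v = n) (hstar : IsEmpty (G ≃g completeBipartiteGraph (Fin 1) (Fin n))) :
    ∃ a, G.Adj v a ∧ 2 ≤ G.degree a := by
  by_contra! hleaf
  obtain ⟨e⟩ := nonempty_iso_completeBipartiteGraph_of_neighborSet_subset hG (v := v)
    fun w hw x hx ↦ by
      have hcard : (G.neighborFinset w).card ≤ 1 := Nat.le_of_lt_succ (hleaf w hw)
      exact Finset.card_le_one.mp hcard x (by simpa using hx) v (by simpa using hw.symm)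
  exact hstar.false
    (e.trans (completeBipartiteGraphCongr (.refl _)
      (Fintype.equivFinOfCardEq ((G.card_neighborSet_eq_degree v).trans hv))))

theorem exists_iso_cycleGraph_of_not_isAcyclic [G.LocallyFinite] (hG : G.Preconnected)
    (hdeg : ∀ v, G.degree v ≤ 2) (hcyc : ¬G.IsAcyclic) : ∃ n, Nonempty (G ≃g cycleGraph n) := by
  simp only [isAcyclic_iff_free_cycleGraph, not_forall, not_not] at hcyc
  obtain ⟨n, hn, ⟨f⟩⟩ := hcyc
  obtain ⟨m, rfl⟩ := Nat.exists_eq_add_of_le' hn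
  exact ⟨m + 3, nonempty_iso_of_neighborSet_subset_image hG f fun _ ↦
    neighborSet_subset_image_of_degree_le f (cycleGraph_degree_three_le ▸ hdeg _)⟩

theorem eq_or_eq_of_degree_le_two {x a b y : V} [Fintype (G.neighborSet x)]
    (hx : G.degree x ≤ 2) (ha : G.Adj x a) (hb : G.Adj x b) (hab : a ≠ b) (hy : G.Adj x y) :
    y = a ∨ y = b := by
  classical
  have hpair : {a, b} = G.neighborFinset x :=
    Finset.eq_of_subset_of_card_le (by simp [Finset.insert_subset_iff, ha, hb])
      (by rwa [Finset.card_pair hab, card_neighborFinset_eq_degree])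
  simpa [← hpair] using (G.mem_neighborFinset x y).mpr hy

-- If `p` is nil, then `p.snd = u`, so that `hu` makes `u` isolated.
theorem nonempty_iso_pathGraph_of_isPath [G.LocallyFinite] (hG : G.Preconnected)
    (hdeg : ∀ v, G.degree v ≤ 2) {u v : V} {p : G.Walk u v} (hp : p.IsPath)
    (hu : G.neighborSet u ⊆ {p.snd}) (hv : G.neighborSet v ⊆ {p.penultimate}) :
    Nonempty (G ≃g pathGraph (p.length + 1)) := by
  classical
  have hcopy (i : Fin (p.length + 1)) : hp.pathGraphCopy i = p.getVert i :=
    p.support_getElem_eq_getVert _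
  refine nonempty_iso_of_neighborSet_subset_image hG hp.pathGraphCopy fun ⟨i, hi⟩ y hy ↦ ?_
  rw [hcopy, mem_neighborSet] at hy
  suffices hnext : ∃ j ≤ p.length, (i + 1 = j ∨ j + 1 = i) ∧ p.getVert j = y by
    obtain ⟨j, hj, hij, rfl⟩ := hnext
    exact ⟨⟨j, Nat.lt_succ_of_le hj⟩, pathGraph_adj.mpr hij, hcopy _⟩
  rcases i.eq_zero_or_pos with rfl | hpos
  · rw [p.getVert_zero] at hy
    obtain rfl := hu hy
    have hnil : ¬p.Nil := fun h ↦ by cases h; exact G.irrefl hy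
    exact ⟨1, Walk.not_nil_iff_lt_length.mp hnil, .inl rfl, rfl⟩
  rcases (Nat.le_of_lt_succ hi).eq_or_lt with rfl | hlt
  · rw [p.getVert_length] at hy
    obtain rfl := hv hy
    exact ⟨p.length - 1, Nat.sub_le _ _, .inr (Nat.sub_add_cancel hpos), rfl⟩
  · have hprev : G.Adj (p.getVert i) (p.getVert (i - 1)) := by
      simpa [Nat.sub_add_cancel hpos] using (p.adj_getVert_succ (i := i - 1) (by lia)).symm
    have hne : p.getVert (i - 1) ≠ p.getVert (i + 1) := fun h ↦ by
      have := hp.getVert_injOn (Set.mem_ofPred.mpr (by lia)) (Set.mem_ofPred.mpr (by lia)) h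
      lia
    rcases eq_or_eq_of_degree_le_two (hdeg _) hprev (p.adj_getVert_succ hlt) hne hy with rfl | rfl
    · exact ⟨i - 1, by lia, .inr (Nat.sub_add_cancel hpos), rfl⟩
    · exact ⟨i + 1, hlt, .inl rfl, rfl⟩

theorem exists_iso_pathGraph_of_isAcyclic [Finite G.edgeSet] [G.LocallyFinite] (hG : G.Connected)
    (hdeg : ∀ v, G.degree v ≤ 2) (hacyc : G.IsAcyclic) : ∃ n, Nonempty (G ≃g pathGraph n) := by
  have := hG.nonempty
  obtain ⟨u, v, p, hp, hmax⟩ := Walk.exists_isPath_forall_isPath_length_le_length G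
  have hstart : G.neighborSet u ⊆ {p.snd} := by
    intro y hy
    rw [mem_neighborSet] at hy
    have hlong : ¬(p.cons hy.symm).IsPath := fun h ↦ by simpa using hmax _ _ _ h
    exact hacyc.eq_snd_of_adj_start hp hy (by_contra fun h ↦ hlong (hp.cons h))
  have hend : G.neighborSet v ⊆ {p.penultimate} := by
    intro y hy
    rw [mem_neighborSet] at hy
    have hlong : ¬(p.concat hy).IsPath := fun h ↦ by simpa using hmax _ _ _ h
    exact hacyc.eq_penultimate_of_adj_end hp hy (by_contra fun h ↦ hlong (hp.concat h hy))
  exact ⟨_, nonempty_iso_pathGraph_of_isPath hG.preconnected hdeg hp hstart hend⟩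

theorem exists_iso_pathGraph_or_exists_iso_cycleGraph [Finite G.edgeSet] [G.LocallyFinite]
    (hG : G.Connected) (hdeg : ∀ v, G.degree v ≤ 2) :
    (∃ n, Nonempty (G ≃g pathGraph n)) ∨ ∃ n, Nonempty (G ≃g cycleGraph n) :=
  (em G.IsAcyclic).imp (exists_iso_pathGraph_of_isAcyclic hG hdeg)
    (exists_iso_cycleGraph_of_not_isAcyclic hG.preconnected hdeg)

end Recognition

section LineGraph

variable {V : Type*} {G : SimpleGraph V}

theorem lineGraph_adj_of_ne {v a b : V} (ha : G.Adj v a) (hb : G.Adj v b) (hab : a ≠ b) :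
    G.lineGraph.Adj ⟨s(v, a), ha⟩ ⟨s(v, b), hb⟩ :=
  lineGraph_adj_iff_exists.mpr ⟨fun h ↦ hab (Sym2.congr_right.mp (congrArg Subtype.val h)), v,
    Sym2.mem_mk_left v a, Sym2.mem_mk_left v b⟩

theorem image_neighborSet_lineGraph {u v : V} (h : G.Adj u v) :
    Subtype.val '' G.lineGraph.neighborSet ⟨s(u, v), h⟩ =
      (G.incidenceSet u ∪ G.incidenceSet v) \ {s(u, v)} := by
  ext e
  simp only [Set.mem_image, mem_neighborSet, lineGraph_adj_iff_exists, Subtype.exists, incidenceSet,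
    Set.mem_sdiff, Set.mem_union, Set.mem_ofPred_eq, Set.mem_singleton_iff, Sym2.mem_iff,
    exists_eq_or_imp, exists_eq_left]
  grind

noncomputable instance instLocallyFiniteLineGraph [G.LocallyFinite] :
    G.lineGraph.LocallyFinite := by
  classical
  intro e
  suffices hfin : (G.lineGraph.neighborSet e).Finite from hfin.fintype
  obtain ⟨⟨u, v⟩, h⟩ := e
  refine Set.Finite.of_finite_image ?_ Subtype.val_injective.injOn
  rw [image_neighborSet_lineGraph h]
  exact Set.toFinite _

theorem degree_lineGraph_add_two [G.LocallyFinite] {u v : V} (h : G.Adj u v) :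
    G.lineGraph.degree ⟨s(u, v), h⟩ + 2 = G.degree u + G.degree v := by
  classical
  have himage : (G.lineGraph.neighborFinset ⟨s(u, v), h⟩).map (.subtype _) =
      (G.incidenceFinset u ∪ G.incidenceFinset v).erase s(u, v) := by
    rw [← Finset.coe_inj]
    simpa using image_neighborSet_lineGraph h
  have hmem : s(u, v) ∈ G.incidenceFinset u ∪ G.incidenceFinset v := by
    simp [G.mem_incidenceFinset, G.mem_incidence_iff_neighbor, h]
  have hinter : G.incidenceFinset u ∩ G.incidenceFinset v = {s(u, v)} := by
    rw [← Finset.coe_inj]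
    simpa using G.incidenceSet_inter_incidenceSet_of_adj h
  calc G.lineGraph.degree ⟨s(u, v), h⟩ + 2
      = (G.incidenceFinset u ∪ G.incidenceFinset v).card +
          (G.incidenceFinset u ∩ G.incidenceFinset v).card := by
        rw [← card_neighborFinset_eq_degree, ← Finset.card_map (.subtype _), himage, hinter,
          ← Finset.card_erase_add_one hmem, Finset.card_singleton]
    _ = G.degree u + G.degree v := by
        simp only [Finset.card_union_add_card_inter, card_incidenceFinset_eq_degree]

theorem exists_degree_lineGraph_three_add [G.LocallyFinite] {v a b c : V} (ha : G.Adj v a)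
    (hb : G.Adj v b) (hc : G.Adj v c) (hab : a ≠ b) (hac : a ≠ c) (hbc : b ≠ c) :
    ∃ e, G.lineGraph.lineGraph.lineGraph.degree e + 14 =
      4 * G.degree v + 2 * G.degree a + G.degree b + G.degree c := by
  have hadj : G.lineGraph.lineGraph.Adj ⟨s(_, _), lineGraph_adj_of_ne ha hb hab⟩
      ⟨s(_, _), lineGraph_adj_of_ne ha hc hac⟩ :=
    lineGraph_adj_of_ne _ _ (lineGraph_adj_of_ne hb hc hbc).ne
  refine ⟨⟨s(_, _), hadj⟩, ?_⟩
  have va := degree_lineGraph_add_two ha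
  have vb := degree_lineGraph_add_two hb
  have vc := degree_lineGraph_add_two hc
  have vab := degree_lineGraph_add_two (lineGraph_adj_of_ne ha hb hab)
  have vac := degree_lineGraph_add_two (lineGraph_adj_of_ne ha hc hac)
  have vabc := degree_lineGraph_add_two hadj
  lia

theorem exists_degree_lt_degree_lineGraph_three [G.LocallyFinite] (hG : G.Preconnected)
    (hclaw : IsEmpty (G ≃g completeBipartiteGraph (Fin 1) (Fin 3))) {v : V}
    (hv : 3 ≤ G.degree v) : ∃ e, G.degree v < G.lineGraph.lineGraph.lineGraph.degree e := by
  classical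
  obtain ⟨a, ha, hlarge⟩ : ∃ a, G.Adj v a ∧ (4 ≤ G.degree v ∨ 2 ≤ G.degree a) := by
    rcases hv.eq_or_lt with hthree | hfour
    · obtain ⟨a, ha, hdeg⟩ := exists_adj_two_le_degree hG hthree.symm hclaw
      exact ⟨a, ha, .inr hdeg⟩
    · obtain ⟨a, ha⟩ := (G.degree_pos_iff_exists_adj v).mp (by lia)
      exact ⟨a, ha, .inl hfour⟩
  have hcard : 1 < ((G.neighborFinset v).erase a).card := by
    rw [Finset.card_erase_of_mem (by simpa using ha), card_neighborFinset_eq_degree]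
    lia
  obtain ⟨b, hb, c, hc, hbc⟩ := Finset.one_lt_card.mp hcard
  simp only [Finset.mem_erase, mem_neighborFinset] at hb hc
  obtain ⟨e, he⟩ := exists_degree_lineGraph_three_add ha hb.2 hc.2 hb.1.symm hc.1.symm hbc
  have := ha.degree_pos_right
  have := hb.2.degree_pos_right
  have := hc.2.degree_pos_right
  exact ⟨e, by lia⟩

end LineGraph

theorem maxDeg_index_le_three_general {V : Type*} [Finite V] {G : SimpleGraph V}
    [G.LocallyFinite] (hG : G.Connected) (hpath : ∀ k : ℕ, IsEmpty (G ≃g pathGraph k))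
    (hcycle : ∀ k : ℕ, IsEmpty (G ≃g cycleGraph k))
    (hclaw : IsEmpty (G ≃g completeBipartiteGraph (Fin 1) (Fin 3))) :
    ∃ e, ∀ v, G.degree v < G.lineGraph.lineGraph.lineGraph.degree e := by
  have := hG.nonempty
  obtain ⟨m, hm⟩ := Finite.exists_max fun v ↦ G.degree v
  have hthree : 3 ≤ G.degree m := by
    by_contra! hlt
    rcases exists_iso_pathGraph_or_exists_iso_cycleGraph hG
      (fun v ↦ (hm v).trans (Nat.le_of_lt_succ hlt)) with ⟨k, ⟨f⟩⟩ | ⟨k, ⟨f⟩⟩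
    · exact (hpath k).false f
    · exact (hcycle k).false f
  obtain ⟨e, he⟩ := exists_degree_lt_degree_lineGraph_three hG.preconnected hclaw hthree
  exact ⟨e, fun v ↦ (hm v).trans_lt he⟩

namespace FGraph

variable {X Y : FGraph}

theorem deg_eq_degree (v : X.V) [Fintype (X.G.neighborSet v)] : X.deg v = X.G.degree v := by
  rw [deg, Nat.card_eq_fintype_card, card_neighborSet_eq_degree]

instance finite_line [Finite X.V] : Finite X.line.V :=
  inferInstanceAs (Finite X.G.edgeSet)

noncomputable instance instLocallyFiniteLine [X.G.LocallyFinite] : X.line.G.LocallyFinite :=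
  inferInstanceAs X.G.lineGraph.LocallyFinite

theorem maxDeg_lt_maxDeg_of_forall_deg_lt [Finite X.V] [Nonempty X.V] [Finite Y.V] {e : Y.V}
    (h : ∀ v, X.deg v < Y.deg e) : X.maxDeg < Y.maxDeg := by
  obtain ⟨v, hv⟩ : X.maxDeg ∈ Set.range X.deg :=
    Nat.sSup_mem (Set.range_nonempty _) (Set.finite_range _).bddAbove
  calc X.maxDeg = X.deg v := hv.symm
    _ < Y.deg e := h v
    _ ≤ Y.maxDeg := le_csSup (Set.finite_range _).bddAbove ⟨e, rfl⟩

theorem Prolific.maxDeg_lt_maxDeg_line_three [Finite X.V] (hp : X.Prolific) :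
    X.maxDeg < X.line.line.line.maxDeg := by
  classical
  obtain ⟨hconn, hpath, hcycle, hclaw⟩ := hp
  have := hconn.nonempty
  have := Fintype.ofFinite X.V
  obtain ⟨e, he⟩ : ∃ e, ∀ v, X.G.degree v < X.line.line.line.G.degree e :=
    maxDeg_index_le_three_general hconn hpath hcycle hclaw
  exact maxDeg_lt_maxDeg_of_forall_deg_lt fun v ↦ by simpa only [deg_eq_degree] using he v

end FGraph

/-- For a prolific graph there is `r` with `1 ≤ r ≤ 3` and `Δ(L^r(G)) > Δ(G)`. -/
theorem maxDeg_index_le_three (X : FGraph) [Finite X.V] (hp : X.Prolific) :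
    ∃ r : ℕ, 1 ≤ r ∧ r ≤ 3 ∧ X.maxDeg < (X.iter r).maxDeg :=
  ⟨3, by lia, le_rfl, hp.maxDeg_lt_maxDeg_line_three⟩
end

section
/- Let G be a prolific graph. Then the average degree strictly increases after one iteration: d(L(G)) > d(G). -/
open SimpleGraph

/-!
Write `n`, `m` and `ℓ` for the numbers of vertices of `G`, edges of `G` and edges of `L(G)`; the
claim is `m² < nℓ`. Pairs of edges meeting at a vertex are counted by `ℓ = ∑ v, (deg v).choose 2`,
so `∑ v, (deg v)² = 2(ℓ + m)` and Cauchy–Schwarz gives `2m² ≤ n(ℓ + m)`, which settles `m > n`.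
The bound `d ≤ d.choose 2 + 1`, strict for `3 ≤ d`, gives `2m < ℓ + n` as soon as some vertex has
degree at least three, which settles `m = n` and `m = n - 1`; connectedness excludes smaller `m`.

Such a vertex exists. Otherwise a cycle in `G`, or a longest path if there is none, already contains
all the edges at each of its vertices, hence is all of the connected graph `G`.
-/

section LineGraphEdges

variable {V : Type*} (G : SimpleGraph V)

lemma card_edgeSet_lineGraph [Fintype V] [DecidableRel G.Adj] :
    Nat.card G.lineGraph.edgeSet = ∑ v, (G.degree v).choose 2 := by
  classical
  let star (v : V) : Finset G.edgeSet := {e | v ∈ (e : Sym2 V)}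
  let starPairs (v : V) : Finset (Sym2 G.edgeSet) := (star v).offDiag.image Sym2.mk.uncurry
  have card_star (v : V) : (star v).card = G.degree v := by
    rw [← G.card_incidenceFinset_eq_degree, G.incidenceFinset_eq_filter,
      ← Finset.card_map (Function.Embedding.subtype _)]
    congr 1
    ext e
    simp [star, and_comm]
  have mem_starPairs (v : V) (e₁ e₂ : G.edgeSet) :
      s(e₁, e₂) ∈ starPairs v ↔ e₁ ≠ e₂ ∧ v ∈ (e₁ : Sym2 V) ∧ v ∈ (e₂ : Sym2 V) := by
    simp only [starPairs, star, Finset.mem_image, Finset.mem_offDiag, Finset.mem_filter_univ,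
      Prod.exists, Function.uncurry_apply_pair, Sym2.eq_iff]
    grind
  have edgeSet_eq : G.lineGraph.edgeSet = (Finset.univ.biUnion starPairs : Finset _) := by
    ext e
    induction e with | _ e₁ e₂
    simp [lineGraph_adj_iff_exists, mem_starPairs]
  have disjoint_starPairs : ((Finset.univ : Finset V) : Set V).PairwiseDisjoint starPairs := by
    intro v _ w _ hvw
    rw [Function.onFun, Finset.disjoint_left]
    intro e hv hw
    induction e with | _ e₁ e₂
    obtain ⟨hne, hv₁, hv₂⟩ := (mem_starPairs v e₁ e₂).1 hv
    obtain ⟨-, hw₁, hw₂⟩ := (mem_starPairs w e₁ e₂).1 hw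
    have eq_mk {e : G.edgeSet} (hv : v ∈ e.1) (hw : w ∈ e.1) : e.1 = s(v, w) :=
      (Sym2.mem_and_mem_iff hvw).1 ⟨hv, hw⟩
    exact hne (Subtype.ext ((eq_mk hv₁ hw₁).trans (eq_mk hv₂ hw₂).symm))
  rw [edgeSet_eq, Nat.card_coe_set_eq, Set.ncard_coe_finset, Finset.card_biUnion disjoint_starPairs]
  simp only [starPairs, Sym2.card_image_offDiag, card_star]

lemma sum_degree_eq_two_mul_card_edgeSet [Fintype V] [DecidableRel G.Adj] :
    ∑ v, G.degree v = 2 * Nat.card G.edgeSet := by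
  rw [G.sum_degrees_eq_twice_card_edges, Nat.card_eq_fintype_card, edgeFinset_card]

lemma sum_degree_sq [Fintype V] [DecidableRel G.Adj] :
    ∑ v, G.degree v ^ 2 = 2 * (Nat.card G.lineGraph.edgeSet + Nat.card G.edgeSet) := by
  have sq_eq (d : ℕ) : d ^ 2 = 2 * d.choose 2 + d := by
    induction d with
    | zero => rfl
    | succ d ih => rw [Nat.choose_succ_succ' d 1, Nat.choose_one_right]; linarith
  simp_rw [sq_eq, Finset.sum_add_distrib, ← Finset.mul_sum, ← card_edgeSet_lineGraph,
    sum_degree_eq_two_mul_card_edgeSet, mul_add]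

lemma two_mul_card_edgeSet_sq_le [Finite V] :
    2 * Nat.card G.edgeSet ^ 2 ≤
      Nat.card V * (Nat.card G.lineGraph.edgeSet + Nat.card G.edgeSet) := by
  classical
  have := Fintype.ofFinite V
  have cauchy_schwarz : (∑ v, G.degree v) ^ 2 ≤ Nat.card V * ∑ v, G.degree v ^ 2 := by
    simpa using sq_sum_le_card_mul_sum_sq (s := Finset.univ) (f := fun v ↦ G.degree v)
  rw [sum_degree_eq_two_mul_card_edgeSet, sum_degree_sq] at cauchy_schwarz
  linarith

variable {G} in
lemma two_mul_card_edgeSet_lt_of_three_le_degree [Fintype V] [DecidableRel G.Adj] {v : V}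
    (hv : 3 ≤ G.degree v) :
    2 * Nat.card G.edgeSet < Nat.card G.lineGraph.edgeSet + Nat.card V := by
  have le_choose_two (d : ℕ) (hd : 3 ≤ d) : d ≤ d.choose 2 := by
    rw [Nat.choose_two_right, Nat.le_div_iff_mul_le two_pos]
    exact Nat.mul_le_mul_left d (by omega)
  have le_choose_two_add_one (d : ℕ) : d ≤ d.choose 2 + 1 := by
    by_cases hd : 3 ≤ d
    · exact (le_choose_two d hd).trans (Nat.le_succ _)
    · interval_cases d <;> decide
  calc 2 * Nat.card G.edgeSet
      = ∑ w, G.degree w := (sum_degree_eq_two_mul_card_edgeSet G).symm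
    _ < ∑ w, ((G.degree w).choose 2 + 1) :=
        Finset.sum_lt_sum (fun w _ ↦ le_choose_two_add_one _)
          ⟨v, Finset.mem_univ v, Nat.lt_succ_of_le (le_choose_two _ hv)⟩
    _ = Nat.card G.lineGraph.edgeSet + Nat.card V := by
        rw [Finset.sum_add_distrib, card_edgeSet_lineGraph, Finset.sum_const, smul_eq_mul, mul_one,
          Finset.card_univ, Nat.card_eq_fintype_card]

variable {G} in
lemma card_edgeSet_sq_lt_of_three_le_degree [Fintype V] [DecidableRel G.Adj]
    (hG : G.Connected) {v : V} (hv : 3 ≤ G.degree v) :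
    Nat.card G.edgeSet ^ 2 < Nat.card V * Nat.card G.lineGraph.edgeSet := by
  have edges_lower := hG.card_vert_le_card_edgeSet_add_one
  have degree_lt : G.degree v < Nat.card V := by
    simpa using G.degree_lt_card_verts v
  have cauchy_schwarz := two_mul_card_edgeSet_sq_le G
  have line_lower := two_mul_card_edgeSet_lt_of_three_le_degree hv
  set n := Nat.card V
  set m := Nat.card G.edgeSet
  set l := Nat.card G.lineGraph.edgeSet
  obtain hnm | hnm | hnm : n < m ∨ n = m ∨ n = m + 1 := by omega
  · nlinarith
  · rw [hnm] at line_lower ⊢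
    nlinarith
  · rw [hnm] at line_lower ⊢
    nlinarith

end LineGraphEdges

section MaxDegreeTwo

variable {V W : Type*} {G : SimpleGraph V}

lemma subgraph_eq_top_of_neighborSet_eq (hG : G.Preconnected) {H : G.Subgraph}
    (hne : H.verts.Nonempty) (hH : ∀ v ∈ H.verts, H.neighborSet v = G.neighborSet v) :
    H = ⊤ := by
  have mem_verts (w : V) : w ∈ H.verts := by
    by_contra hw
    obtain ⟨v, hv⟩ := hne
    obtain ⟨p⟩ := hG v w
    obtain ⟨d, -, hfst, hsnd⟩ := p.exists_boundary_dart H.verts hv hw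
    have hadj : d.snd ∈ H.neighborSet d.fst := (hH d.fst hfst).symm ▸ d.adj
    exact hsnd (H.edge_vert (H.adj_symm hadj))
  ext v w
  · simp [mem_verts]
  · simpa using Set.ext_iff.1 (hH v (mem_verts v)) w

lemma neighborSet_eq_of_degree_le_ncard {H : G.Subgraph} {v : V} [Fintype (G.neighborSet v)]
    (h : G.degree v ≤ (H.neighborSet v).ncard) : H.neighborSet v = G.neighborSet v :=
  Set.eq_of_subset_of_ncard_le (H.neighborSet_subset v) <| by
    rwa [Set.ncard_eq_toFinset_card', Set.toFinset_card, card_neighborSet_eq_degree]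

lemma nonempty_iso_of_copy_of_degree_le [Nonempty W] {H : SimpleGraph W} [G.LocallyFinite]
    [H.LocallyFinite] (hG : G.Preconnected) (f : Copy H G)
    (hf : ∀ w, G.degree (f w) ≤ H.degree w) : Nonempty (H ≃g G) := by
  suffices f.toSubgraph = ⊤ from ⟨Subgraph.topIso.comp (this ▸ f.isoToSubgraph)⟩
  refine subgraph_eq_top_of_neighborSet_eq hG ?_ ?_
  · obtain ⟨w⟩ := ‹Nonempty W›
    exact ⟨f w, w, trivial, rfl⟩
  · rintro _ ⟨w, -, rfl⟩
    have finite_neighborSet : (f.toSubgraph.neighborSet (f w)).Finite :=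
      (Set.toFinite (G.neighborSet (f w))).subset (f.toSubgraph.neighborSet_subset _)
    have image_subset : f.toHom '' H.neighborSet w ⊆ f.toSubgraph.neighborSet (f w) := by
      rintro _ ⟨x, hx, rfl⟩
      exact ⟨w, x, hx, rfl, rfl⟩
    apply neighborSet_eq_of_degree_le_ncard
    calc G.degree (f w)
        ≤ H.degree w := hf w
      _ = (f.toHom '' H.neighborSet w).ncard := by
        rw [Set.ncard_image_of_injective _ f.injective,
          Set.ncard_eq_toFinset_card', Set.toFinset_card, card_neighborSet_eq_degree]
      _ ≤ (f.toSubgraph.neighborSet (f w)).ncard :=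
        Set.ncard_le_ncard image_subset finite_neighborSet

lemma nonempty_iso_cycleGraph_of_not_isAcyclic [G.LocallyFinite] (hG : G.Preconnected)
    (hdeg : ∀ v, G.degree v ≤ 2) (hcyc : ¬ G.IsAcyclic) :
    ∃ n, Nonempty (G ≃g cycleGraph n) := by
  simp only [isAcyclic_iff_free_cycleGraph, not_forall, Free, not_not] at hcyc
  obtain ⟨n, hn, ⟨f⟩⟩ := hcyc
  obtain ⟨k, rfl⟩ := Nat.exists_eq_add_of_le' hn
  obtain ⟨e⟩ := nonempty_iso_of_copy_of_degree_le hG f fun w ↦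
    (hdeg _).trans_eq cycleGraph_degree_three_le.symm
  exact ⟨k + 3, ⟨e.symm⟩⟩

lemma toSubgraph_adj_of_adj_start (hG : G.IsAcyclic) {u v w : V} {p : G.Walk u v} (hp : p.IsPath)
    (hmax : ∀ u' (q : G.Walk u' v), q.IsPath → q.length ≤ p.length) (huw : G.Adj u w) :
    p.toSubgraph.Adj u w := by
  have mem_support : w ∈ p.support := by
    by_contra hw
    have := hmax w (p.cons huw.symm) (hp.cons hw)
    simp at this
  have not_nil : ¬ p.Nil := fun hnil ↦ by
    cases hnil
    simp_all
  rw [hG.eq_snd_of_adj_start hp huw mem_support]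
  exact p.toSubgraph_adj_snd not_nil

lemma nonempty_iso_pathGraph_of_isAcyclic [Finite V] [G.LocallyFinite] (hG : G.Connected)
    (hdeg : ∀ v, G.degree v ≤ 2) (hacyc : G.IsAcyclic) :
    ∃ n, Nonempty (G ≃g pathGraph n) := by
  classical
  have := hG.nonempty
  obtain ⟨u, v, p, hp, hmax⟩ := Walk.exists_isPath_forall_isPath_length_le_length G
  suffices p.toSubgraph = ⊤ from
    ⟨p.length + 1, ⟨(Subgraph.topIso.comp (this ▸ hp.pathGraphIsoToSubgraph)).symm⟩⟩
  refine subgraph_eq_top_of_neighborSet_eq hG.preconnected ⟨u, p.start_mem_verts_toSubgraph⟩ ?_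
  intro w hw
  obtain ⟨i, rfl, hi⟩ := p.mem_support_iff_exists_getVert.1 (p.mem_verts_toSubgraph.1 hw)
  by_cases h_start : i = 0
  · subst h_start
    rw [p.getVert_zero]
    exact (p.toSubgraph.neighborSet_subset u).antisymm fun x hx ↦
      toSubgraph_adj_of_adj_start hacyc hp (fun _ q hq ↦ hmax _ _ q hq) hx
  by_cases h_end : i = p.length
  · subst h_end
    rw [p.getVert_length]
    refine (p.toSubgraph.neighborSet_subset v).antisymm fun x hx ↦ ?_
    rw [← p.toSubgraph_reverse]
    exact toSubgraph_adj_of_adj_start hacyc hp.reverse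
      (fun _ q hq ↦ (hmax _ _ q hq).trans_eq p.length_reverse.symm) hx
  · apply neighborSet_eq_of_degree_le_ncard
    rw [hp.ncard_neighborSet_toSubgraph_internal_eq_two h_start (by omega)]
    exact hdeg _

lemma exists_three_le_degree [Finite V] [G.LocallyFinite] (hG : G.Connected)
    (hpath : ∀ n, IsEmpty (G ≃g pathGraph n)) (hcycle : ∀ n, IsEmpty (G ≃g cycleGraph n)) :
    ∃ v, 3 ≤ G.degree v := by
  by_contra! hdeg
  replace hdeg (v : V) : G.degree v ≤ 2 := Nat.le_of_lt_succ (hdeg v)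
  by_cases hacyc : G.IsAcyclic
  · obtain ⟨n, ⟨e⟩⟩ := nonempty_iso_pathGraph_of_isAcyclic hG hdeg hacyc
    exact (hpath n).false e
  · obtain ⟨n, ⟨e⟩⟩ := nonempty_iso_cycleGraph_of_not_isAcyclic hG.preconnected hdeg hacyc
    exact (hcycle n).false e

end MaxDegreeTwo

theorem avgDeg_line_gt_general {V : Type*} [Finite V] {G : SimpleGraph V} (hG : G.Connected)
    (hpath : ∀ k, IsEmpty (G ≃g pathGraph k)) (hcycle : ∀ k, IsEmpty (G ≃g cycleGraph k)) :
    (2 * Nat.card G.edgeSet / Nat.card V : ℚ) <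
      2 * Nat.card G.lineGraph.edgeSet / Nat.card G.edgeSet := by
  classical
  have := Fintype.ofFinite V
  have := hG.nonempty
  obtain ⟨v, hv⟩ := exists_three_le_degree hG hpath hcycle
  have card_edgeSet_pos : 0 < Nat.card G.edgeSet := by
    rw [Nat.card_eq_fintype_card, ← edgeFinset_card]
    exact (by omega : 0 < G.degree v).trans_le (G.degree_le_card_edgeFinset v)
  have key : (Nat.card G.edgeSet ^ 2 : ℚ) < Nat.card V * Nat.card G.lineGraph.edgeSet := by
    exact_mod_cast card_edgeSet_sq_lt_of_three_le_degree hG hv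
  rw [div_lt_div_iff₀ (by exact_mod_cast Nat.card_pos) (by exact_mod_cast card_edgeSet_pos)]
  linarith

/-- For a prolific graph, the average degree strictly increases: `d(L(G)) > d(G)`. -/
theorem avgDeg_line_gt (X : FGraph) [Finite X.V] (hp : X.Prolific) :
    X.avgDeg < X.line.avgDeg :=
  avgDeg_line_gt_general hp.1 hp.2.1 hp.2.2.1
end
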